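/- (Integral bound on local maximal eigenvalue comparison) Let W be a matrix A_2 weight on ℝ^d and Q a cube. Define N_Q(x) = sup_{R : x ∈ R ⊆ Q} ‖W^{1/2}(x)(m_R(W^{-1}))^{1/2}‖, the supremum over subcubes R of Q containing x. Then ∫_Q (N_Q(x))² dx ≲ |Q| [W]_{A_2}, with implied constant depending only on n and d. -/

import Mathlib

open MeasureTheory Matrix
open scoped ComplexOrder

/-- The operator norm on `n × n` complex matrices induced by the Euclidean norm. -/
noncomputable def matNorm {n : ℕ} (M : Matrix (Fin n) (Fin n) ℂ) : ℝ :=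
  ‖(Matrix.toEuclideanCLM (𝕜 := ℂ) M : EuclideanSpace ℂ (Fin n) →L[ℂ] EuclideanSpace ℂ (Fin n))‖

/-- The Euclidean norm of a vector in `ℂⁿ`. -/
noncomputable def vecNorm {n : ℕ} (v : Fin n → ℂ) : ℝ :=
  ‖(WithLp.equiv 2 (Fin n → ℂ)).symm v‖

/-- A (half-open, axis-parallel) cube in `ℝ^d`. -/
def IsCube {d : ℕ} (I : Set (Fin d → ℝ)) : Prop :=
  ∃ (a : Fin d → ℝ) (ℓ : ℝ), 0 < ℓ ∧ I = Set.univ.pi fun i => Set.Ico (a i) (a i + ℓ)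

/-- The average `(1/|I|) ∫_I g` of a scalar function over a set `I`. -/
noncomputable def avg {d : ℕ} (I : Set (Fin d → ℝ)) (g : (Fin d → ℝ) → ℝ) : ℝ :=
  (volume I).toReal⁻¹ * ∫ x in I, g x

/-- The (entrywise) average of a vector-valued function over a set `I`. -/
noncomputable def vavg {d n : ℕ} (I : Set (Fin d → ℝ)) (f : (Fin d → ℝ) → Fin n → ℂ) :
    Fin n → ℂ :=
  fun i => (volume I).toReal⁻¹ • (∫ x in I, f x i)

/-- The (entrywise) average of a matrix-valued function over a set `I`. -/
noncomputable def mavg {d n : ℕ} (I : Set (Fin d → ℝ))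
    (F : (Fin d → ℝ) → Matrix (Fin n) (Fin n) ℂ) : Matrix (Fin n) (Fin n) ℂ :=
  Matrix.of fun i j => (volume I).toReal⁻¹ • (∫ x in I, F x i j)

open scoped ENNReal

namespace St19

/-- cube with corner `a` and side `l` -/
def cube {d : ℕ} (a : Fin d → ℝ) (l : ℝ) : Set (Fin d → ℝ) :=
  Set.univ.pi fun i => Set.Ico (a i) (a i + l)

/-- corner of a dyadic child -/
noncomputable def child {d : ℕ} (a : Fin d → ℝ) (l : ℝ) (e : Fin d → Bool) : Fin d → ℝ :=
  fun i => a i + if e i then l / 2 else 0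

theorem mem_cube {d : ℕ} {a : Fin d → ℝ} {l : ℝ} {x : Fin d → ℝ} :
    x ∈ cube a l ↔ ∀ i, a i ≤ x i ∧ x i < a i + l := by
  simp [cube, Set.mem_pi]

theorem measurableSet_cube {d : ℕ} (a : Fin d → ℝ) (l : ℝ) : MeasurableSet (cube a l) :=
  MeasurableSet.univ_pi fun _ => measurableSet_Ico

theorem volume_cube {d : ℕ} (a : Fin d → ℝ) (l : ℝ) :
    volume (cube a l) = ENNReal.ofReal l ^ d := by
  simp [cube, Real.volume_pi_Ico]

theorem cube_eq_iUnion {d : ℕ} (a : Fin d → ℝ) (l : ℝ) (hl : 0 < l) :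
    cube a l = ⋃ e : Fin d → Bool, cube (child a l e) (l / 2) := by
  ext x
  simp only [Set.mem_iUnion, mem_cube, child]
  constructor
  · intro h
    refine ⟨fun i => decide (a i + l / 2 ≤ x i), fun i => ?_⟩
    have := h i
    by_cases hx : a i + l / 2 ≤ x i
    · rw [if_pos (by simpa using hx)]
      constructor <;> linarith
    · rw [if_neg (by simpa using hx)]
      push Not at hx
      constructor <;> linarith
  · rintro ⟨e, h⟩ i
    have := h i
    cases he : e i <;> simp [he] at this <;> constructor <;> linarith

theorem cube_disj {d : ℕ} (a : Fin d → ℝ) (l : ℝ) :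
    Pairwise (Function.onFun Disjoint fun e : Fin d → Bool => cube (child a l e) (l / 2)) := by
  intro e e' hne
  rw [Function.onFun, Set.disjoint_left]
  intro x hx hx'
  apply hne
  funext i
  have h1 := mem_cube.1 hx i
  have h2 := mem_cube.1 hx' i
  simp only [child] at h1 h2
  cases he : e i <;> cases he' : e' i <;> simp [he, he'] at h1 h2 ⊢ <;> linarith

/-- truncated dyadic maximal function -/
noncomputable def NN {d : ℕ} (f : (Fin d → ℝ) → ℝ → (Fin d → ℝ) → ℝ≥0∞) :
    ℕ → (Fin d → ℝ) → ℝ → (Fin d → ℝ) → ℝ≥0∞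
  | 0, _, _, _ => 0
  | k + 1, a, l, x => f a l x ⊔
      ⨆ e : Fin d → Bool, (cube (child a l e) (l / 2)).indicator (NN f k (child a l e) (l / 2)) x

theorem NN_mono {d : ℕ} (f : (Fin d → ℝ) → ℝ → (Fin d → ℝ) → ℝ≥0∞) (k : ℕ) :
    ∀ a l x, NN f k a l x ≤ NN f (k + 1) a l x := by
  induction k with
  | zero => intro a l x; simp [NN]
  | succ k ih =>
    intro a l x
    rw [NN, NN]
    refine sup_le_sup le_rfl (iSup_mono fun e => ?_)
    exact Set.indicator_le_indicator (ih _ _ _)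

theorem NN_child {d : ℕ} (f : (Fin d → ℝ) → ℝ → (Fin d → ℝ) → ℝ≥0∞) (k : ℕ) (a l x)
    (e : Fin d → Bool) (hx : x ∈ cube (child a l e) (l / 2)) :
    NN f (k + 1) a l x = f a l x ⊔ NN f k (child a l e) (l / 2) x := by
  rw [NN]
  congr 1
  apply le_antisymm
  · refine iSup_le fun e' => ?_
    by_cases h : e' = e
    · subst h; rw [Set.indicator_of_mem hx]
    · have := cube_disj a l h
      rw [Function.onFun, Set.disjoint_right] at this
      rw [Set.indicator_of_notMem (this hx)]
      exact zero_le
  · refine le_trans ?_ (le_iSup _ e)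
    rw [Set.indicator_of_mem hx]

theorem NN_aemeas {d : ℕ} (f : (Fin d → ℝ) → ℝ → (Fin d → ℝ) → ℝ≥0∞)
    (b : Fin d → ℝ) (m : ℝ)
    (hf : ∀ a l, 0 < l → AEMeasurable (f a l) (volume.restrict (cube b m))) (k : ℕ) :
    ∀ a l, 0 < l → AEMeasurable (NN f k a l) (volume.restrict (cube b m)) := by
  induction k with
  | zero => intro a l _; exact aemeasurable_const
  | succ k ih =>
    intro a l hl
    have : NN f (k + 1) a l = fun x => f a l x ⊔ ⨆ e : Fin d → Bool,
      (cube (child a l e) (l / 2)).indicator (NN f k (child a l e) (l / 2)) x := by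
      funext x; rw [NN]
    rw [this]
    refine (hf a l hl).sup (AEMeasurable.iSup fun e => ?_)
    exact (ih _ _ (by linarith)).indicator (measurableSet_cube _ _)

/-- bottom-up stopping time estimate -/
theorem NN_bound {d : ℕ} (f w u : (Fin d → ℝ) → ℝ → (Fin d → ℝ) → ℝ≥0∞)
    (κ A n D : ℝ≥0∞)
    (hn : n ≤ κ) (hD : κ * A + D * n ≤ κ * D)
    (hwm : ∀ a l b m, 0 < l → 0 < m → AEMeasurable (w a l) (volume.restrict (cube b m)))
    (hw : ∀ a l, 0 < l → ∫⁻ x in cube a l, w a l x ≤ A * volume (cube a l))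
    (hu : ∀ a l, 0 < l → ∫⁻ x in cube a l, u a l x ≤ n * volume (cube a l))
    (h4 : ∀ a l b m, 0 < l → 0 < m → ∫⁻ x in cube a l, u b m x ≤ κ * volume (cube a l) →
      ∀ x, f a l x ≤ κ * w b m x) (k : ℕ) :
    ∀ a l b m, 0 < l → 0 < m →
      ∫⁻ x in cube a l, NN f k a l x ⊔ (κ * w b m x) ≤
        κ * (∫⁻ x in cube a l, w b m x) + D * ∫⁻ x in cube a l, u b m x := by
  induction k with
  | zero =>
    intro a l b m hl hm
    simp only [NN, zero_le, sup_of_le_right]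
    rw [lintegral_const_mul'' _ (hwm b m a l hm hl)]
    exact le_self_add
  | succ k ih =>
    have case2 : ∀ a l b m, 0 < l → 0 < m →
        ∫⁻ x in cube a l, u b m x ≤ κ * volume (cube a l) →
        ∫⁻ x in cube a l, NN f (k + 1) a l x ⊔ (κ * w b m x) ≤
        κ * (∫⁻ x in cube a l, w b m x) + D * ∫⁻ x in cube a l, u b m x := by
      intro a l b m hl hm hle
      have hf := h4 a l b m hl hm hle
      have split : ∀ g : (Fin d → ℝ) → ℝ≥0∞, ∫⁻ x in cube a l, g x =
          ∑ e : Fin d → Bool, ∫⁻ x in cube (child a l e) (l / 2), g x := by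
        intro g
        rw [cube_eq_iUnion a l hl, lintegral_iUnion (fun e => measurableSet_cube _ _)
          (cube_disj a l), tsum_fintype]
      rw [split, split (w b m), split (u b m), Finset.mul_sum, Finset.mul_sum,
        ← Finset.sum_add_distrib]
      refine Finset.sum_le_sum fun e _ => ?_
      refine le_trans ?_ (ih (child a l e) (l / 2) b m (by linarith) hm)
      refine setLIntegral_mono' (measurableSet_cube _ _) fun x hx => ?_
      rw [NN_child f k a l x e hx]
      refine sup_le (sup_le ?_ le_sup_left) le_sup_right
      exact (hf x).trans le_sup_right
    intro a l b m hl hm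
    rcases le_or_gt (∫⁻ x in cube a l, u b m x) (κ * volume (cube a l)) with hle | hgt
    · exact case2 a l b m hl hm hle
    · have h1 : ∫⁻ x in cube a l, NN f (k + 1) a l x ⊔ (κ * w b m x) ≤
          ∫⁻ x in cube a l, (κ * w b m x + NN f (k + 1) a l x) :=
        lintegral_mono fun x => sup_le le_add_self le_self_add
      refine h1.trans ?_
      rw [lintegral_add_left' ((hwm b m a l hm hl).const_mul κ),
        lintegral_const_mul'' _ (hwm b m a l hm hl)]
      gcongr
      have h2 := case2 a l a l hl hl ((hu a l hl).trans (by gcongr))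
      calc ∫⁻ x in cube a l, NN f (k + 1) a l x
          ≤ ∫⁻ x in cube a l, NN f (k + 1) a l x ⊔ (κ * w a l x) :=
            lintegral_mono fun x => le_sup_left
        _ ≤ _ := h2
        _ ≤ κ * (A * volume (cube a l)) + D * (n * volume (cube a l)) := by
            gcongr
            · exact hw a l hl
            · exact hu a l hl
        _ = (κ * A + D * n) * volume (cube a l) := by ring
        _ ≤ κ * D * volume (cube a l) := by gcongr
        _ = D * (κ * volume (cube a l)) := by ring
        _ ≤ _ := by gcongr

theorem NN_descend {d : ℕ} (f : (Fin d → ℝ) → ℝ → (Fin d → ℝ) → ℝ≥0∞) (k : ℕ) :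
    ∀ (a : Fin d → ℝ) (l : ℝ) (j : Fin d → ℕ) (b : Fin d → ℝ) (h : ℝ) (x : Fin d → ℝ),
      0 < h → l = h * 2 ^ k → (∀ i, j i < 2 ^ k) → (∀ i, b i = a i + j i * h) →
      x ∈ cube b h → f b h x ≤ NN f (k + 1) a l x := by
  induction k with
  | zero =>
    intro a l j b h x hh hl hj hb hx
    have hab : b = a := by
      funext i; rw [hb i]; have := hj i; have : j i = 0 := by simpa using this
      simp [this]
    have : l = h := by simpa using hl
    subst this; subst hab
    rw [NN]; exact le_sup_left
  | succ k ih =>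
    intro a l j b h x hh hl hj hb hx
    set e : Fin d → Bool := fun i => decide (2 ^ k ≤ j i) with he
    set j' : Fin d → ℕ := fun i => if 2 ^ k ≤ j i then j i - 2 ^ k else j i with hj'
    have hl2 : l / 2 = h * 2 ^ k := by rw [hl, pow_succ]; ring
    have hj'lt : ∀ i, j' i < 2 ^ k := by
      intro i
      have := hj i
      rw [pow_succ] at this
      simp only [hj']
      split_ifs <;> omega
    have hb' : ∀ i, b i = child a l e i + j' i * h := by
      intro i
      rw [hb i]
      simp only [child, he, hj', decide_eq_true_eq]
      split_ifs with hc
      · rw [hl2, Nat.cast_sub hc]; push_cast; ring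
      · ring
    have hxm : x ∈ cube (child a l e) (l / 2) := by
      rw [mem_cube] at hx ⊢
      intro i
      obtain ⟨h1, h2⟩ := hx i
      rw [hb' i] at h1 h2
      have h3 : ((j' i : ℝ) + 1) ≤ 2 ^ k := by exact_mod_cast hj'lt i
      have h4 : 0 ≤ (j' i : ℝ) * h := by positivity
      have h5 : ((j' i : ℝ) + 1) * h ≤ 2 ^ k * h := by gcongr
      rw [hl2]
      constructor <;> nlinarith
    rw [NN_child f (k + 1) a l x e hxm]
    exact (ih _ _ j' b h x hh hl2 hj'lt hb' hx).trans le_sup_right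

theorem third (L r l h : ℝ) (k : ℕ) (hh : 0 < h) (hL : 2 * L = h * 2 ^ k) (hl0 : 0 < l)
    (hl : l ≤ h / 3) (hr : 0 ≤ r) (hrl : r + l ≤ L) :
    ∃ (t : Bool) (j : ℕ), j < 2 ^ k ∧
      (if t then -(2 * L / 3) else 0) + j * h ≤ r ∧
      r + l ≤ (if t then -(2 * L / 3) else 0) + j * h + h := by
  have hLp : 0 < L := by linarith
  have aux : ∀ y : ℝ, 0 ≤ y → y < 2 * L → ∃ j : ℕ, j < 2 ^ k ∧ j * h ≤ y ∧ y < j * h + h := by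
    intro y hy hy2
    refine ⟨⌊y / h⌋₊, ?_, ?_, ?_⟩
    · rw [Nat.floor_lt (by positivity), div_lt_iff₀ hh]
      push_cast; linarith
    · have := Nat.floor_le (show 0 ≤ y / h by positivity)
      rwa [le_div_iff₀ hh] at this
    · have := Nat.lt_floor_add_one (y / h)
      rw [div_lt_iff₀ hh] at this
      linarith
  obtain ⟨j0, a0, b0, c0⟩ := aux r hr (by linarith)
  obtain ⟨j1, a1, b1, c1⟩ := aux (r + 2 * L / 3) (by linarith) (by linarith)
  by_cases h0 : r + l ≤ j0 * h + h
  · exact ⟨false, j0, a0, by simpa using b0, by simpa using h0⟩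
  by_cases h1 : r + l ≤ -(2 * L / 3) + j1 * h + h
  · exact ⟨true, j1, a1, by simp; linarith, by simpa using h1⟩
  exfalso
  push Not at h0 h1
  have e1 : ((3 * j1 : ℤ) - 3 * j0 - 2 ^ k : ℝ) * h < 1 * h := by push_cast; nlinarith
  have e2 : (-1) * h < ((3 * j1 : ℤ) - 3 * j0 - 2 ^ k : ℝ) * h := by push_cast; nlinarith
  have e1' := lt_of_mul_lt_mul_right e1 hh.le
  have e2' := lt_of_mul_lt_mul_right e2 hh.le
  have f1 : (3 * j1 - 3 * j0 - 2 ^ k : ℤ) < 1 := by exact_mod_cast e1'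
  have f2 : (-1 : ℤ) < (3 * j1 - 3 * j0 - 2 ^ k : ℤ) := by exact_mod_cast e2'
  have f3 : (3 : ℤ) ∣ 2 ^ k := ⟨j1 - j0, by omega⟩
  have f4 : (3 : ℤ) ∣ 2 := Int.prime_three.dvd_of_dvd_pow f3
  omega

/-- top cube corners -/
noncomputable def top {d : ℕ} (a : Fin d → ℝ) (L : ℝ) (t : Fin d → Bool) : Fin d → ℝ :=
  fun i => a i + if t i then -(2 * L / 3) else 0

theorem cube_subset_iff {d : ℕ} {a b : Fin d → ℝ} {l m : ℝ} (hl : 0 < l) :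
    cube a l ⊆ cube b m ↔ ∀ i, b i ≤ a i ∧ a i + l ≤ b i + m := by
  constructor
  · intro h i
    have hne : cube a l ≠ ∅ := by
      apply Set.Nonempty.ne_empty
      exact ⟨a, mem_cube.2 fun i => ⟨le_rfl, by linarith⟩⟩
    have := Set.univ_pi_subset_univ_pi_iff.1 h
    rcases this with h' | h'
    · have := h' i
      rw [Set.Ico_subset_Ico_iff (by linarith)] at this
      exact this
    · obtain ⟨i, hi⟩ := h'
      rw [Set.Ico_eq_empty_iff] at hi
      exact absurd (by linarith) hi
  · intro h x hx
    rw [mem_cube] at hx ⊢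
    intro i
    have := hx i; have := h i
    constructor <;> linarith

theorem exists_scale (L l : ℝ) (hl : 0 < l) (hL : l ≤ 2 * L / 3) :
    ∃ (k : ℕ) (h : ℝ), 0 < h ∧ 2 * L = h * 2 ^ k ∧ l ≤ h / 3 ∧ h ≤ 6 * l := by
  have hLp : 0 < L := by linarith
  obtain ⟨k, hk1, hk2⟩ := exists_nat_pow_near (x := 2 * L / 3 / l) (y := 2)
    (by rw [le_div_iff₀ hl]; linarith) (by norm_num)
  rw [le_div_iff₀ hl] at hk1
  rw [div_lt_iff₀ hl, pow_succ] at hk2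
  have h2 : (0 : ℝ) < 2 ^ k := by positivity
  refine ⟨k, 2 * L / 2 ^ k, by positivity, by field_simp, ?_, ?_⟩
  · rw [div_div, le_div_iff₀ (by positivity)]; linarith
  · rw [div_le_iff₀ h2]; linarith

theorem f_le_NN {d : ℕ} (f : (Fin d → ℝ) → ℝ → (Fin d → ℝ) → ℝ≥0∞)
    (h5 : ∀ a l b m x, 0 < l → 0 < m → cube a l ⊆ cube b m → m ≤ 6 * l →
      f a l x ≤ 6 ^ d * f b m x)
    (a : Fin d → ℝ) (L : ℝ) (hL : 0 < L) (r : Fin d → ℝ) (l : ℝ) (hl : 0 < l)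
    (hsub : cube r l ⊆ cube a L) (x : Fin d → ℝ) (hx : x ∈ cube r l) :
    ∃ (t : Fin d → Bool) (k : ℕ), f r l x ≤ 6 ^ d * NN f k (top a L t) (2 * L) x := by
  have hs := (cube_subset_iff hl).1 hsub
  rcases lt_or_ge (2 * L / 3) l with hbig | hsmall
  · refine ⟨fun _ => false, 1, ?_⟩
    have htop : top a L (fun _ => false) = a := by funext i; simp [top]
    rw [htop]
    refine (h5 r l a (2 * L) x hl (by linarith) ?_ (by linarith)).trans ?_
    · refine (cube_subset_iff hl).2 fun i => ?_
      have := hs i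
      constructor <;> linarith
    · gcongr
      rw [NN]; exact le_sup_left
  · obtain ⟨k, h, hh, hLk, hl3, hl6⟩ := exists_scale L l hl hsmall
    have := fun i => third L (r i - a i) l h k hh hLk hl hl3 (by linarith [(hs i).1])
      (by linarith [(hs i).2])
    choose t j hj h1 h2 using this
    refine ⟨t, k + 1, ?_⟩
    set b : Fin d → ℝ := fun i => top a L t i + j i * h with hb
    have hsubb : cube r l ⊆ cube b h := by
      refine (cube_subset_iff hl).2 fun i => ?_
      have := h1 i; have := h2 i
      simp only [hb, top]
      constructor <;> linarith
    refine (h5 r l b h x hl hh hsubb hl6).trans ?_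
    gcongr
    exact NN_descend f k _ _ j b h x hh hLk hj (fun i => rfl) (hsubb hx)

theorem abstract_bound {d : ℕ} (f w u : (Fin d → ℝ) → ℝ → (Fin d → ℝ) → ℝ≥0∞)
    (κ A n D : ℝ≥0∞)
    (hn : n ≤ κ) (hD : κ * A + D * n ≤ κ * D)
    (hfm : ∀ a l b m, 0 < l → 0 < m → AEMeasurable (f a l) (volume.restrict (cube b m)))
    (hwm : ∀ a l b m, 0 < l → 0 < m → AEMeasurable (w a l) (volume.restrict (cube b m)))
    (hw : ∀ a l, 0 < l → ∫⁻ x in cube a l, w a l x ≤ A * volume (cube a l))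
    (hu : ∀ a l, 0 < l → ∫⁻ x in cube a l, u a l x ≤ n * volume (cube a l))
    (h4 : ∀ a l b m, 0 < l → 0 < m → ∫⁻ x in cube a l, u b m x ≤ κ * volume (cube a l) →
      ∀ x, f a l x ≤ κ * w b m x)
    (h5 : ∀ a l b m x, 0 < l → 0 < m → cube a l ⊆ cube b m → m ≤ 6 * l →
      f a l x ≤ 6 ^ d * f b m x)
    (a : Fin d → ℝ) (L : ℝ) (hL : 0 < L) (g : (Fin d → ℝ) → ℝ≥0∞)
    (hg : ∀ x ∈ cube a L, ∀ C : ℝ≥0∞, (∀ r l, 0 < l → cube r l ⊆ cube a L → x ∈ cube r l →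
      f r l x ≤ C) → g x ≤ C) :
    ∫⁻ x in cube a L, g x ≤ 24 ^ d * (κ * D) * volume (cube a L) := by
  have hL2 : 0 < 2 * L := by linarith
  have one : ∀ t : Fin d → Bool, ∫⁻ x in cube a L, ⨆ k, NN f k (top a L t) (2 * L) x ≤
      κ * D * volume (cube (top a L t) (2 * L)) := by
    intro t
    have hsub : cube a L ⊆ cube (top a L t) (2 * L) := by
      refine (cube_subset_iff hL).2 fun i => ?_
      simp only [top]
      split_ifs <;> constructor <;> linarith
    refine (lintegral_mono_set hsub).trans ?_
    rw [lintegral_iSup' (fun k => NN_aemeas f _ _ (fun a l hl => hfm a l _ _ hl hL2) k _ _ hL2)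
      (Filter.Eventually.of_forall fun x => monotone_nat_of_le_succ fun k => NN_mono f k _ _ _)]
    refine iSup_le fun k => ?_
    calc ∫⁻ x in cube (top a L t) (2 * L), NN f k (top a L t) (2 * L) x
        ≤ ∫⁻ x in cube (top a L t) (2 * L), NN f k (top a L t) (2 * L) x ⊔
            (κ * w (top a L t) (2 * L) x) := lintegral_mono fun x => le_sup_left
      _ ≤ _ := NN_bound f w u κ A n D hn hD hwm hw hu h4 k _ _ (top a L t) (2 * L) hL2 hL2
      _ ≤ κ * (A * volume (cube (top a L t) (2 * L))) +
            D * (n * volume (cube (top a L t) (2 * L))) := by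
            gcongr
            · exact hw _ _ hL2
            · exact hu _ _ hL2
      _ = (κ * A + D * n) * volume (cube (top a L t) (2 * L)) := by ring
      _ ≤ _ := by gcongr
  have hmeas : ∀ t : Fin d → Bool, AEMeasurable (fun x => ⨆ k, NN f k (top a L t) (2 * L) x)
      (volume.restrict (cube a L)) := fun t =>
    AEMeasurable.iSup fun k => NN_aemeas f _ _ (fun a l hl => hfm a l _ _ hl hL) k _ _ hL2
  calc ∫⁻ x in cube a L, g x
      ≤ ∫⁻ x in cube a L, 6 ^ d * ∑ t : Fin d → Bool, ⨆ k, NN f k (top a L t) (2 * L) x := by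
        refine setLIntegral_mono' (measurableSet_cube _ _) fun x hx => ?_
        refine hg x hx _ fun r l hl hsub hxr => ?_
        obtain ⟨t, k, htk⟩ := f_le_NN f h5 a L hL r l hl hsub x hxr
        refine htk.trans ?_
        gcongr
        refine (le_iSup (fun k => NN f k (top a L t) (2 * L) x) k).trans ?_
        exact Finset.single_le_sum (f := fun t => ⨆ k, NN f k (top a L t) (2 * L) x)
          (fun _ _ => zero_le) (Finset.mem_univ t)
    _ = 6 ^ d * ∑ t : Fin d → Bool, ∫⁻ x in cube a L, ⨆ k, NN f k (top a L t) (2 * L) x := by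
        rw [lintegral_const_mul' _ _ (by simp), lintegral_finsetSum' _ fun t _ => hmeas t]
    _ ≤ 6 ^ d * ∑ t : Fin d → Bool, κ * D * (2 ^ d * volume (cube a L)) := by
        gcongr with t
        refine (one t).trans (le_of_eq ?_)
        rw [volume_cube, volume_cube, ENNReal.ofReal_mul (by norm_num), mul_pow]
        norm_num
    _ = _ := by
        simp only [Finset.sum_const, Finset.card_univ, Fintype.card_pi, Fintype.card_bool,
          Finset.prod_const, Fintype.card_fin, nsmul_eq_mul]
        have : (24 : ℝ≥0∞) ^ d = 6 ^ d * 2 ^ d * 2 ^ d := by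
          rw [← mul_pow, ← mul_pow]; norm_num
        rw [this]; push_cast; ring


/-- squared Frobenius norm -/
noncomputable def F {n : ℕ} (A : Matrix (Fin n) (Fin n) ℂ) : ℝ := ∑ i, ∑ j, ‖A i j‖ ^ 2

theorem F_nonneg {n : ℕ} (A : Matrix (Fin n) (Fin n) ℂ) : 0 ≤ F A := by
  unfold F; positivity

theorem F_conjTranspose {n : ℕ} (A : Matrix (Fin n) (Fin n) ℂ) : F Aᴴ = F A := by
  unfold F
  rw [Finset.sum_comm]
  simp

theorem F_eq_trace {n : ℕ} (A : Matrix (Fin n) (Fin n) ℂ) : (trace (A * Aᴴ)).re = F A := by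
  simp only [trace, diag, mul_apply, conjTranspose_apply, F, Complex.re_sum]
  refine Finset.sum_congr rfl fun i _ => Finset.sum_congr rfl fun j _ => ?_
  rw [← Complex.normSq_eq_norm_sq, Complex.star_def, Complex.mul_conj, Complex.ofReal_re]

theorem F_mul {n : ℕ} (A B : Matrix (Fin n) (Fin n) ℂ) : F (A * B) ≤ F A * F B := by
  have h : ∀ i j, ‖(A * B) i j‖ ^ 2 ≤ (∑ k, ‖A i k‖ ^ 2) * ∑ k, ‖B k j‖ ^ 2 := by
    intro i j
    rw [mul_apply]
    calc ‖∑ k, A i k * B k j‖ ^ 2 ≤ (∑ k, ‖A i k‖ * ‖B k j‖) ^ 2 := by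
          gcongr
          refine (norm_sum_le _ _).trans (le_of_eq ?_)
          simp
      _ ≤ _ := Finset.sum_mul_sq_le_sq_mul_sq _ _ _
  calc F (A * B) ≤ ∑ i, ∑ j, (∑ k, ‖A i k‖ ^ 2) * ∑ k, ‖B k j‖ ^ 2 :=
        Finset.sum_le_sum fun i _ => Finset.sum_le_sum fun j _ => h i j
    _ = F A * F B := by
        unfold F
        rw [Finset.sum_mul]
        refine Finset.sum_congr rfl fun i _ => ?_
        rw [← Finset.mul_sum]
        congr 1
        rw [Finset.sum_comm]

theorem matNorm_sq_le {n : ℕ} (A : Matrix (Fin n) (Fin n) ℂ) : matNorm A ^ 2 ≤ F A := by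
  have : matNorm A ≤ Real.sqrt (F A) := by
    unfold matNorm
    refine ContinuousLinearMap.opNorm_le_bound _ (Real.sqrt_nonneg _) fun v => ?_
    rw [EuclideanSpace.norm_eq, EuclideanSpace.norm_eq, ← Real.sqrt_mul (F_nonneg A)]
    apply Real.sqrt_le_sqrt
    unfold F
    rw [Finset.sum_mul]
    refine Finset.sum_le_sum fun i _ => ?_
    have e : (toEuclideanCLM (𝕜 := ℂ) A v) i = ∑ k, A i k * v k := by
      simp [mulVec, dotProduct]
    rw [e]
    calc ‖∑ k, A i k * v k‖ ^ 2 ≤ (∑ k, ‖A i k‖ * ‖v k‖) ^ 2 := by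
          gcongr
          refine (norm_sum_le _ _).trans (le_of_eq ?_)
          simp
      _ ≤ _ := Finset.sum_mul_sq_le_sq_mul_sq _ _ _
  calc matNorm A ^ 2 ≤ Real.sqrt (F A) ^ 2 := by
        gcongr
        exact norm_nonneg _
    _ = F A := Real.sq_sqrt (F_nonneg A)

theorem F_le_matNorm {n : ℕ} (A : Matrix (Fin n) (Fin n) ℂ) : F A ≤ n * matNorm A ^ 2 := by
  unfold F
  rw [Finset.sum_comm]
  have : ∀ j, ∑ i, ‖A i j‖ ^ 2 ≤ matNorm A ^ 2 := by
    intro j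
    have h := (toEuclideanCLM (𝕜 := ℂ) A).le_opNorm (EuclideanSpace.single j (1 : ℂ))
    rw [PiLp.norm_single, norm_one, mul_one] at h
    have h2 : ‖toEuclideanCLM (𝕜 := ℂ) A (EuclideanSpace.single j (1 : ℂ))‖ ^ 2
        = ∑ i, ‖A i j‖ ^ 2 := by
      rw [EuclideanSpace.norm_sq_eq]
      refine Finset.sum_congr rfl fun i _ => ?_
      congr 2
      simp
    rw [← h2]
    unfold matNorm
    gcongr
  calc _ ≤ ∑ j : Fin n, matNorm A ^ 2 := Finset.sum_le_sum fun j _ => this j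
    _ = _ := by simp

/-- `re tr (M G M)` -/
noncomputable def tq {n : ℕ} (M G : Matrix (Fin n) (Fin n) ℂ) : ℝ := (trace (M * G * M)).re

theorem tq_expand {n : ℕ} (M G : Matrix (Fin n) (Fin n) ℂ) :
    tq M G = (∑ i, ∑ j, (M * M) i j * G j i).re := by
  unfold tq
  rw [trace_mul_comm, ← Matrix.mul_assoc]
  simp [trace, mul_apply]

theorem tq_sq {n : ℕ} {M T : Matrix (Fin n) (Fin n) ℂ} (hM : M.IsHermitian)
    (hT : T.IsHermitian) : tq M (T * T) = F (M * T) := by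
  rw [← F_eq_trace, conjTranspose_mul, hM.eq, hT.eq, tq]
  simp only [Matrix.mul_assoc]

theorem tq_nonneg {n : ℕ} {M G : Matrix (Fin n) (Fin n) ℂ} (hM : M.IsHermitian)
    (hG : G.PosSemidef) : 0 ≤ tq M G := by
  have h := hG.conjTranspose_mul_mul_same M
  rw [hM.eq] at h
  exact (Complex.le_def.1 h.trace_nonneg).1

theorem tq_integrable {d n : ℕ} (M : Matrix (Fin n) (Fin n) ℂ)
    (G : (Fin d → ℝ) → Matrix (Fin n) (Fin n) ℂ) (R : Set (Fin d → ℝ))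
    (hG : ∀ i j, IntegrableOn (fun x => G x i j) R volume) :
    IntegrableOn (fun x => tq M (G x)) R volume := by
  simp only [tq_expand]
  refine Integrable.re (𝕜 := ℂ) ?_
  exact integrable_finsetSum _ fun i _ => integrable_finsetSum _ fun j _ =>
    (hG j i).const_mul _

theorem tq_mavg {d n : ℕ} (M : Matrix (Fin n) (Fin n) ℂ)
    (G : (Fin d → ℝ) → Matrix (Fin n) (Fin n) ℂ) (R : Set (Fin d → ℝ))
    (hG : ∀ i j, IntegrableOn (fun x => G x i j) R volume) :
    tq M (mavg R G) = (volume R).toReal⁻¹ * ∫ x in R, tq M (G x) := by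
  simp only [tq_expand]
  have h1 : ∀ i j, Integrable (fun x => (M * M) i j * G x j i) (volume.restrict R) :=
    fun i j => (hG j i).const_mul _
  have h2 : Integrable (fun x => ∑ i, ∑ j, (M * M) i j * G x j i) (volume.restrict R) :=
    integrable_finsetSum _ fun i _ => integrable_finsetSum _ fun j _ => h1 i j
  have h3 := integral_re (𝕜 := ℂ) h2
  simp only [RCLike.re_to_complex] at h3
  rw [h3, integral_finsetSum _ fun i _ => integrable_finsetSum _ fun j _ => h1 i j]
  rw [← Complex.re_ofReal_mul, Finset.mul_sum]
  congr 1
  refine Finset.sum_congr rfl fun i _ => ?_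
  rw [integral_finsetSum _ fun j _ => h1 i j, Finset.mul_sum]
  refine Finset.sum_congr rfl fun j _ => ?_
  rw [integral_const_mul]
  simp [mavg]
  ring


theorem isCube_cube {d : ℕ} (a : Fin d → ℝ) {l : ℝ} (hl : 0 < l) : IsCube (cube a l) :=
  ⟨a, l, hl, rfl⟩

theorem vol_pos {d : ℕ} (a : Fin d → ℝ) {l : ℝ} (hl : 0 < l) :
    0 < (volume (cube a l)).toReal := by
  rw [volume_cube, ENNReal.toReal_pow, ENNReal.toReal_ofReal hl.le]
  positivity

theorem vol_ne_top {d : ℕ} (a : Fin d → ℝ) (l : ℝ) : volume (cube a l) ≠ ⊤ := by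
  rw [volume_cube]; exact ENNReal.pow_ne_top ENNReal.ofReal_ne_top

theorem lint_tq {d n : ℕ} {M : Matrix (Fin n) (Fin n) ℂ} (hM : M.IsHermitian)
    {G : (Fin d → ℝ) → Matrix (Fin n) (Fin n) ℂ} (hp : ∀ x, (G x).PosSemidef)
    (a : Fin d → ℝ) {l : ℝ} (hl : 0 < l)
    (hG : ∀ i j, IntegrableOn (fun x => G x i j) (cube a l) volume) :
    ∫⁻ x in cube a l, ENNReal.ofReal (tq M (G x)) =
      ENNReal.ofReal (tq M (mavg (cube a l) G)) * volume (cube a l) := by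
  rw [← ofReal_integral_eq_lintegral_ofReal (tq_integrable M G _ hG)
    (Filter.Eventually.of_forall fun x => tq_nonneg hM (hp x)), tq_mavg M G _ hG]
  have hv := vol_pos a hl
  have hv2 : volume (cube a l) = ENNReal.ofReal (volume (cube a l)).toReal :=
    (ENNReal.ofReal_toReal (vol_ne_top a l)).symm
  generalize (volume (cube a l)).toReal = v at hv hv2 ⊢
  rw [hv2, ← ENNReal.ofReal_mul' hv.le]
  congr 1
  field_simp

end St19

open St19

/-- Integral bound on the local maximal eigenvalue comparison: for a matrix `A₂` weight `W`
(characteristic at most `Cw`) and a cube `Q`, with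
`N_Q(x) = sup_{x ∈ R ⊆ Q} ‖W^{1/2}(x)(m_R(W⁻¹))^{1/2}‖` (supremum over subcubes `R` of `Q`
containing `x`), one has `∫_Q N_Q(x)² dx ≲ |Q| Cw`, with constant depending only on `n`, `d`.
`Whalf = W^{1/2}` and `Sq I, Tq I` are the positive square roots of `m_I W, m_I(W⁻¹)`. -/
theorem stmt19 {d n : ℕ} :
    ∃ c : ℝ, 0 < c ∧
      ∀ (W Whalf : (Fin d → ℝ) → Matrix (Fin n) (Fin n) ℂ),
        (∀ x, (W x).PosDef) →
        (∀ x, (Whalf x).PosDef ∧ Whalf x * Whalf x = W x) →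
      ∀ Sq Tq : Set (Fin d → ℝ) → Matrix (Fin n) (Fin n) ℂ,
        (∀ I, IsCube I → (Sq I).PosDef ∧ Sq I * Sq I = mavg I W) →
        (∀ I, IsCube I → (Tq I).PosDef ∧ Tq I * Tq I = mavg I fun y => (W y)⁻¹) →
      (∀ I, IsCube I → ∀ i j, IntegrableOn (fun x => W x i j) I volume) →
      (∀ I, IsCube I → ∀ i j, IntegrableOn (fun x => (W x)⁻¹ i j) I volume) →
      ∀ Cw : ℝ, 1 ≤ Cw →
      (∀ I, IsCube I → matNorm (Sq I * Tq I) ^ 2 ≤ Cw) →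
      ∀ Q : Set (Fin d → ℝ), IsCube Q →
        (∫⁻ x in Q,
            (⨆ (R : Set (Fin d → ℝ)) (_ : IsCube R ∧ x ∈ R ∧ R ⊆ Q),
              ENNReal.ofReal (matNorm (Whalf x * Tq R))) ^ (2 : ℕ))
          ≤ ENNReal.ofReal (c * Cw) * volume Q := by
  refine ⟨24 ^ d * ((2 * n + 2) * (2 * n)) + 1, by positivity, ?_⟩
  intro W Whalf hW hWh Sq Tq hS hT hWi hVi Cw hCw hA Q hQ
  obtain ⟨a, L, hL, rfl⟩ := hQ
  change (∫⁻ x in cube a L, (⨆ (R : Set (Fin d → ℝ)) (_ : IsCube R ∧ x ∈ R ∧ R ⊆ cube a L),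
    ENNReal.ofReal (matNorm (Whalf x * Tq R))) ^ (2 : ℕ)) ≤ _ * volume (cube a L)
  set V : (Fin d → ℝ) → Matrix (Fin n) (Fin n) ℂ := fun y => (W y)⁻¹ with hV
  have hVp : ∀ x, (V x).PosSemidef := fun x => (hW x).inv.posSemidef
  have hWp : ∀ x, (W x).PosSemidef := fun x => (hW x).posSemidef
  have hWhH : ∀ x, (Whalf x).IsHermitian := fun x => (hWh x).1.isHermitian
  have hTH : ∀ I, IsCube I → (Tq I).IsHermitian := fun I hI => (hT I hI).1.isHermitian
  have hTiH : ∀ I, IsCube I → (Tq I)⁻¹.IsHermitian := fun I hI => (hT I hI).1.inv.isHermitian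
  have hSH : ∀ I, IsCube I → (Sq I).IsHermitian := fun I hI => (hS I hI).1.isHermitian
  have hTu : ∀ I, IsCube I → IsUnit (Tq I).det := fun I hI =>
    (Matrix.isUnit_iff_isUnit_det _).1 (hT I hI).1.isUnit
  have hn0 : (0 : ℝ) ≤ n := Nat.cast_nonneg n
  have hf : ∀ I, IsCube I → ∀ x, tq (Whalf x) (mavg I V) = F (Whalf x * Tq I) := by
    intro I hI x
    rw [← (hT I hI).2, tq_sq (hWhH x) (hTH I hI)]
  have key := abstract_bound
    (fun b l x => ENNReal.ofReal (tq (Whalf x) (mavg (cube b l) V)))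
    (fun b l x => ENNReal.ofReal (tq (Tq (cube b l)) (W x)))
    (fun b l x => ENNReal.ofReal (tq (Tq (cube b l))⁻¹ (V x)))
    (ENNReal.ofReal (2 * n + 2)) (ENNReal.ofReal (n * Cw)) (ENNReal.ofReal n)
    (ENNReal.ofReal (2 * n * Cw)) ?_ ?_ ?_ ?_ ?_ ?_ ?_ ?_ a L hL
    (fun x => (⨆ (R : Set (Fin d → ℝ)) (_ : IsCube R ∧ x ∈ R ∧ R ⊆ cube a L),
      ENNReal.ofReal (matNorm (Whalf x * Tq R))) ^ (2 : ℕ)) ?_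
  · refine key.trans ?_
    gcongr
    have h24 : (24 : ℝ≥0∞) ^ d = ENNReal.ofReal (24 ^ d) := by
      rw [ENNReal.ofReal_pow (by norm_num)]; norm_num
    rw [h24, ← ENNReal.ofReal_mul (by positivity), ← ENNReal.ofReal_mul (by positivity)]
    apply ENNReal.ofReal_le_ofReal
    nlinarith
  · apply ENNReal.ofReal_le_ofReal; linarith
  · have hnC : 0 ≤ n * Cw := by positivity
    rw [← ENNReal.ofReal_mul (by positivity), ← ENNReal.ofReal_mul (by positivity),
      ← ENNReal.ofReal_mul (by positivity), ← ENNReal.ofReal_add (by positivity) (by positivity)]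
    apply ENNReal.ofReal_le_ofReal
    nlinarith
  · -- measurability of f
    intro b l b' m hl hm
    have : (fun x => ENNReal.ofReal (tq (Whalf x) (mavg (cube b l) V))) =
        fun x => ENNReal.ofReal (∑ i, ∑ j, W x i j * mavg (cube b l) V j i).re := by
      funext x
      rw [tq_expand, (hWh x).2]
    rw [this]
    refine AEMeasurable.ennreal_ofReal (Complex.measurable_re.comp_aemeasurable ?_)
    refine Finset.aemeasurable_fun_sum _ fun i _ => Finset.aemeasurable_fun_sum _ fun j _ => ?_
    exact ((hWi _ (isCube_cube b' hm) i j).aestronglyMeasurable.aemeasurable).mul_const _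
  · intro b l b' m hl hm
    exact (tq_integrable _ W _ (hWi _ (isCube_cube b' hm))).aestronglyMeasurable.aemeasurable.ennreal_ofReal
  · intro b l hl
    have hI := isCube_cube b hl
    rw [lint_tq (hTH _ hI) hWp b hl (hWi _ hI)]
    gcongr
    rw [← (hS _ hI).2, tq_sq (hTH _ hI) (hSH _ hI)]
    have e : Tq (cube b l) * Sq (cube b l) = (Sq (cube b l) * Tq (cube b l))ᴴ := by
      rw [conjTranspose_mul, (hTH _ hI).eq, (hSH _ hI).eq]
    rw [e, F_conjTranspose]
    refine (F_le_matNorm _).trans ?_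
    gcongr
    exact hA _ hI
  · intro b l hl
    have hI := isCube_cube b hl
    rw [lint_tq (hTiH _ hI) hVp b hl (hVi _ hI)]
    gcongr
    rw [← (hT _ hI).2, tq, ← Matrix.mul_assoc, Matrix.nonsing_inv_mul _ (hTu _ hI), Matrix.one_mul,
      Matrix.mul_nonsing_inv _ (hTu _ hI)]
    simp
  · intro b l b' m hl hm hle x
    have hI := isCube_cube b hl
    have hI' := isCube_cube b' hm
    rw [lint_tq (hTiH _ hI') hVp b hl (hVi _ hI)] at hle
    have hle2 := (ENNReal.mul_le_mul_iff_left
      (by intro h; have := vol_pos b hl; rw [h] at this; simp at this) (vol_ne_top b l)).1 hle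
    rw [ENNReal.ofReal_le_ofReal_iff (by positivity), ← (hT _ hI).2,
      tq_sq (hTiH _ hI') (hTH _ hI)] at hle2
    rw [← ENNReal.ofReal_mul (by positivity)]
    apply ENNReal.ofReal_le_ofReal
    rw [hf _ hI, ← (hWh x).2, tq_sq (hTH _ hI') (hWhH x)]
    have e : Tq (cube b' m) * Whalf x = (Whalf x * Tq (cube b' m))ᴴ := by
      rw [conjTranspose_mul, (hTH _ hI').eq, (hWhH x).eq]
    have e2 : Whalf x * Tq (cube b l) =
        (Whalf x * Tq (cube b' m)) * ((Tq (cube b' m))⁻¹ * Tq (cube b l)) := by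
      rw [Matrix.mul_assoc, ← Matrix.mul_assoc (Tq (cube b' m)),
        Matrix.mul_nonsing_inv _ (hTu _ hI'), Matrix.one_mul]
    rw [e, F_conjTranspose, e2, mul_comm]
    refine (F_mul _ _).trans ?_
    gcongr
    exact F_nonneg _
  · intro b l b' m x hl hm hsub hml
    have hI := isCube_cube b hl
    have hI' := isCube_cube b' hm
    have h6 : (6 : ℝ≥0∞) ^ d = ENNReal.ofReal (6 ^ d) := by
      rw [ENNReal.ofReal_pow (by norm_num)]; norm_num
    rw [h6, ← ENNReal.ofReal_mul (by positivity)]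
    apply ENNReal.ofReal_le_ofReal
    rw [tq_mavg _ V _ (hVi _ hI), tq_mavg _ V _ (hVi _ hI'), ← mul_assoc]
    have hnn : ∀ y, 0 ≤ tq (Whalf x) (V y) := fun y => tq_nonneg (hWhH x) (hVp y)
    have hIntMono : ∫ y in cube b l, tq (Whalf x) (V y) ≤ ∫ y in cube b' m, tq (Whalf x) (V y) :=
      setIntegral_mono_set (tq_integrable _ V _ (hVi _ hI'))
        (Filter.Eventually.of_forall hnn) (Filter.Eventually.of_forall hsub)
    refine mul_le_mul ?_ hIntMono (integral_nonneg hnn) (by positivity)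
    rw [volume_cube, volume_cube, ENNReal.toReal_pow, ENNReal.toReal_pow,
      ENNReal.toReal_ofReal hl.le, ENNReal.toReal_ofReal hm.le, ← inv_pow, ← inv_pow, ← mul_pow]
    gcongr
    rw [← div_eq_mul_inv, inv_eq_one_div, div_le_div_iff₀ hl hm]
    linarith
  · intro x hx C hC
    have : (⨆ (R : Set (Fin d → ℝ)) (_ : IsCube R ∧ x ∈ R ∧ R ⊆ cube a L),
      ENNReal.ofReal (matNorm (Whalf x * Tq R))) ≤ C ^ (2 : ℝ)⁻¹ := by
      refine iSup_le fun R => iSup_le fun hR => ?_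
      obtain ⟨⟨r, l, hl, rfl⟩, hxR, hsub⟩ := hR
      have h1 := hC r l hl hsub hxR
      rw [hf _ (isCube_cube r hl)] at h1
      rw [ENNReal.le_rpow_inv_iff (by norm_num), ENNReal.rpow_two,
        ← ENNReal.ofReal_pow (show 0 ≤ matNorm _ from norm_nonneg _)]
      exact (ENNReal.ofReal_le_ofReal (matNorm_sq_le _)).trans h1
    rw [ENNReal.le_rpow_inv_iff (by norm_num), ENNReal.rpow_two] at this
    exact this
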